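/- Let p be an odd prime, m positive, n = 2m, q = p^n. Let t ≡ 2 (mod 4) with t not ≡ 0 (mod p^m+1), s_1 = (t+2)/4, s_2 = (3t+2)/4, d_1 = s_1(p^m-1)+1, d_2 = s_2(p^m-1)+1, and l = gcd(t, p^m+1). Then the number of triples (x,y,z) in F_q^3 with x^{d_1}+y^{d_1}+z^{d_1} = 0 and x^{d_2}+y^{d_2}+z^{d_2} = 0 equals ((p^m-2)(p^n-1)/4) l^2 + (3(p^n-1)/2) l + 1. -/

import Mathlib

/-!
Write `Q = p ^ m`, `q = Q ^ 2`, and `σ x = x ^ Q` for the involution of `F = 𝔽_q` with fixed field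
`K = 𝔽_Q`. For `X = x ^ d₁` the exponents are arranged so that `x ^ d₂ * σ X = X ^ 2`
(`pow_exponents`). In terms of `X, Y, Z` the system is therefore `X + Y + Z = 0` together with
`X² / σ X + Y² / σ Y + Z² / σ Z = 0`; clearing denominators after substituting `Z = -(X + Y)`
turns the second equation into `(X * σ Y - Y * σ X) ^ 2 = 0` (`system_iff`). So `Y` is a
`K`-multiple of `X` whenever `X ≠ 0`.

It remains to count preimages under `x ↦ x ^ d₁`. On `Fˣ` this map has a kernel of order
`e = gcd (t / 2, Q + 1) = l / 2`, and it fixes `Kˣ` pointwise, so `X` times any element of `Kˣ` is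
again a value of the map. For each `x ≠ 0`, the pairs `(y, z)` are thus counted by summing
over `b ∈ K` the number of `y` with `y ^ d₁ = X b` times the number of `z` with
`z ^ d₁ = X (-1 - b)`: the values `b = 0, -1` contribute `e` each, and the other `Q - 2` values
contribute `e ^ 2` each (`card_pairs_of_ne_zero`). For `x = 0` there are `1 + (q - 1) e` pairs
(`card_pairs_zero`).
-/

/-! ### Fibres of power maps -/

open Finset in
/-- The kernel of `x ↦ x ^ d` on the cyclic group `Fˣ`, counted inside `F`. -/
lemma card_pow_eq_one_field {F : Type*} [Field F] [Fintype F] [DecidableEq F] (d : ℕ)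
    (hd : d ≠ 0) : #{x : F | x ^ d = 1} = (Fintype.card F - 1).gcd d := by
  rw [← Fintype.card_units, ← Nat.card_eq_fintype_card,
    ← IsCyclic.card_powMonoidHom_ker (G := Fˣ) d, ← Fintype.card_subtype, ← Nat.card_eq_fintype_card]
  symm
  have hu : ∀ u : (powMonoidHom d : Fˣ →* Fˣ).ker, (u.1 : F) ^ d = 1 := by
    intro u
    have h : u.1 ^ d = 1 := u.2
    rw [← Units.val_pow_eq_pow_val, h, Units.val_one]
  refine Nat.card_congr (Equiv.ofBijective
    (fun u : (powMonoidHom d : Fˣ →* Fˣ).ker => (⟨(u.1 : F), hu u⟩ : {x : F // x ^ d = 1}))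
    ⟨fun u v h => Subtype.ext (Units.ext (congrArg Subtype.val h)), fun x => ?_⟩)
  exact ⟨⟨Units.ofPowEqOne x.1 d x.2 hd, Units.pow_ofPowEqOne x.2 hd⟩, rfl⟩

open Finset in
/-- Every nonempty fibre of `x ↦ x ^ d` over a nonzero value is a coset of the kernel. -/
lemma card_fiber {F : Type*} [Field F] [Fintype F] [DecidableEq F] (d : ℕ)
    (hd : d ≠ 0) (w : F) (hw : w ≠ 0) :
    #{y : F | y ^ d = w ^ d} = (Fintype.card F - 1).gcd d := by
  rw [← card_pow_eq_one_field d hd]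
  refine card_bij (fun y _ => y / w) ?_ ?_ ?_
  · intro y hy
    simp only [mem_filter, mem_univ, true_and] at hy ⊢
    rw [div_pow, hy, div_self (pow_ne_zero _ hw)]
  · intro a _ b _ h
    field_simp at h
    exact h
  · intro b hb
    simp only [mem_filter, mem_univ, true_and] at hb
    refine ⟨b * w, ?_, ?_⟩
    · simp [mul_pow, hb]
    · field_simp

open Finset in
lemma card_fiber_zero {F : Type*} [Field F] [Fintype F] [DecidableEq F] (d : ℕ)
    (hd : d ≠ 0) : #{y : F | y ^ d = 0} = 1 := by
  rw [card_eq_one]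
  exact ⟨0, by ext; simp [hd]⟩

open Finset in
/-- In the field with `Q ^ 2` elements, the subfield fixed by `x ↦ x ^ Q` has `Q` elements. -/
lemma card_fixed {F : Type*} [Field F] [Fintype F] [DecidableEq F] (Q : ℕ) (hQ : 2 ≤ Q)
    (hF : Fintype.card F = Q ^ 2) : #{b : F | b ^ Q = b} = Q := by
  obtain ⟨k, rfl⟩ : ∃ k, Q = k + 1 := ⟨Q - 1, by omega⟩
  have h : (univ.filter fun b : F => b ^ (k + 1) = b) =
      insert 0 (univ.filter fun b : F => b ^ k = 1) := by
    ext b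
    simp only [mem_filter, mem_univ, true_and, mem_insert, pow_succ]
    rcases eq_or_ne b 0 with rfl | hb
    · simp
    · simp [hb]
  rw [h, card_insert_of_notMem (by simp [show k ≠ 0 by omega]), card_pow_eq_one_field k (by omega), hF,
    show (k + 1) ^ 2 - 1 = k * (k + 2) from Nat.sub_eq_of_eq_add (by ring),
    Nat.gcd_mul_right_left]

/-! ### The system in terms of `X = x ^ d₁` -/

/-- If `X'`, `Y'`, `Z'` stand for `X² / σ X`, `Y² / σ Y`, `Z² / σ Z` (with value `0` at `0`) and
`X + Y + Z = 0`, then `X' + Y' + Z' = 0` says that `X` and `Y` are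
proportional over the fixed field of `σ`. -/
lemma system_iff {F : Type*} [Field F] (σ : F →+* F) {X Y Z X' Y' Z' : F}
    (hX : X' * σ X = X ^ 2) (hY : Y' * σ Y = Y ^ 2) (hZ : Z' * σ Z = Z ^ 2)
    (hX0 : X = 0 → X' = 0) (hY0 : Y = 0 → Y' = 0) (hZ0 : Z = 0 → Z' = 0)
    (h : X + Y + Z = 0) : X' + Y' + Z' = 0 ↔ X * σ Y = Y * σ X := by
  obtain rfl : Z = -(X + Y) := by linear_combination h
  have key : ∀ {A A' B B' : F}, A' * σ A = A ^ 2 → B' * σ B = B ^ 2 → (A = 0 → A' = 0) →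
      (B = 0 → B' = 0) → A + B = 0 → A' + B' = 0 := by
    intro A A' B B' hA hB hA0 hB0 hAB
    obtain rfl : B = -A := by linear_combination hAB
    rcases eq_or_ne A 0 with rfl | hA'
    · simp [hA0, hB0]
    · have : σ A ≠ 0 := by simpa using hA'
      apply mul_right_cancel₀ this
      rw [map_neg] at hB
      linear_combination hA - hB
  rcases eq_or_ne X 0 with rfl | hx
  · have := key hY hZ hY0 hZ0 (by ring)
    simp only [hX0 rfl, map_zero, zero_mul, mul_zero, iff_true]
    linear_combination this
  rcases eq_or_ne Y 0 with rfl | hy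
  · have := key hX hZ hX0 hZ0 (by ring)
    simp only [hY0 rfl, map_zero, zero_mul, mul_zero, iff_true]
    linear_combination this
  rcases eq_or_ne (X + Y) 0 with hz | hz
  · have := key hX hY hX0 hY0 hz
    obtain rfl : Y = -X := by linear_combination hz
    have h0 := hZ0 (by ring)
    simp only [h0, map_neg, add_zero, this, true_iff]
    ring
  have hx' : σ X ≠ 0 := by simpa using hx
  have hy' : σ Y ≠ 0 := by simpa using hy
  have hz' : σ X + σ Y ≠ 0 := by rw [← map_add]; exact (map_ne_zero σ).2 hz
  rw [map_neg, map_add] at hZ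
  have e : (X' + Y' + Z') * (σ X * σ Y * (σ X + σ Y)) = (X * σ Y - Y * σ X) ^ 2 := by
    linear_combination σ Y * (σ X + σ Y) * hX + σ X * (σ X + σ Y) * hY - σ X * σ Y * hZ
  rw [← sub_eq_zero (a := X * σ Y), ← pow_eq_zero_iff (a := X * σ Y - _) (n := 2) two_ne_zero, ← e]
  simp [hx', hy', hz']

/-- For `t = 4 k + 2` one has `d₁ = (k + 1) (Q - 1) + 1` and `d₂ = (3 k + 2) (Q - 1) + 1`, hence
`d₂ + Q d₁ = 2 d₁ + (k + 1) (Q ^ 2 - 1)`. -/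
lemma pow_exponents {F : Type*} [Field F] [Fintype F] (Q k : ℕ) (hQ : 2 ≤ Q)
    (hF : Fintype.card F = Q ^ 2) (x : F) :
    x ^ ((3 * k + 2) * (Q - 1) + 1) * (x ^ ((k + 1) * (Q - 1) + 1)) ^ Q =
      (x ^ ((k + 1) * (Q - 1) + 1)) ^ 2 := by
  rcases eq_or_ne x 0 with rfl | hx
  · simp
  have h1 : x ^ (Q ^ 2 - 1) = 1 := by rw [← hF]; exact FiniteField.pow_card_sub_one_eq_one x hx
  obtain ⟨r, rfl⟩ : ∃ r, Q = r + 1 := ⟨Q - 1, by omega⟩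
  have h2 : (r + 1) ^ 2 - 1 = r * (r + 2) := by
    exact Nat.sub_eq_of_eq_add (by ring)
  rw [h2] at h1
  rw [← pow_mul, ← pow_add, ← pow_mul, Nat.add_sub_cancel,
    show (3 * k + 2) * r + 1 + ((k + 1) * r + 1) * (r + 1) =
      ((k + 1) * r + 1) * 2 + r * (r + 2) * (k + 1) by ring, pow_add, pow_mul x (r * (r + 2)), h1]
  simp

/-- Elements fixed by `x ↦ x ^ Q` are fixed by every power map with exponent `≡ 1 mod Q - 1`. -/
lemma pow_fixed {F : Type*} [Field F] (Q s : ℕ) (hQ : 2 ≤ Q) (b : F) (hb : b ^ Q = b) :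
    b ^ (s * (Q - 1) + 1) = b := by
  rcases eq_or_ne b 0 with rfl | h
  · simp
  have h1 : b ^ (Q - 1) = 1 := by
    apply mul_right_cancel₀ h
    rw [← pow_succ, one_mul, Nat.sub_add_cancel (by omega), hb]
  rw [pow_succ, mul_comm s, pow_mul, h1, one_pow, one_mul]

/-! ### Counting solutions -/

open Finset in
/-- The number of ways to complete a fixed `x ≠ 0`; the pairs are sorted by
`b = y ^ d / x ^ d`, which runs over the fixed field of `σ`. -/
lemma card_pairs_of_ne_zero {F : Type*} [Field F] [Fintype F] [DecidableEq F] (Q s e : ℕ)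
    (hQ : 2 ≤ Q) (hF : Fintype.card F = Q ^ 2) (σ : F →+* F) (hσ : ∀ x, σ x = x ^ Q)
    (he : (Fintype.card F - 1).gcd (s * (Q - 1) + 1) = e) (x : F) (hx : x ≠ 0) :
    #{yz : F × F | x ^ (s * (Q - 1) + 1) + yz.1 ^ (s * (Q - 1) + 1) +
        yz.2 ^ (s * (Q - 1) + 1) = 0 ∧ x ^ (s * (Q - 1) + 1) * σ (yz.1 ^ (s * (Q - 1) + 1)) =
        yz.1 ^ (s * (Q - 1) + 1) * σ (x ^ (s * (Q - 1) + 1))} = 2 * e + (Q - 2) * e ^ 2 := by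
  have hfix : ∀ b : F, σ b = b → b ^ (s * (Q - 1) + 1) = b :=
    fun b hb => pow_fixed Q s hQ b (by rw [← hσ, hb])
  have hd : s * (Q - 1) + 1 ≠ 0 := by omega
  generalize s * (Q - 1) + 1 = d at *
  have hX : x ^ d ≠ 0 := pow_ne_zero _ hx
  have hσX : σ (x ^ d) ≠ 0 := by simpa using hX
  have hK : #{b : F | σ b = b} = Q := by
    simp only [hσ]; exact card_fixed Q hQ hF
  rw [card_eq_sum_card_fiberwise (f := fun yz : F × F => yz.1 ^ d / x ^ d)
    (t := ({b : F | σ b = b} : Finset F))]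
  swap
  · intro yz h
    simp only [coe_filter, mem_univ, true_and, Set.mem_ofPred_eq] at h ⊢
    rw [map_div₀, div_eq_div_iff hσX hX]
    linear_combination h.2
  have hg : ∀ b : F, σ b = b → b ≠ 0 → #{y : F | y ^ d = x ^ d * b} = e := by
    intro b hb hb0
    rw [← he, ← card_fiber d hd (x * b) (mul_ne_zero hx hb0), mul_pow, hfix b hb]
  have hg0 : #{y : F | y ^ d = x ^ d * 0} = 1 := by
    rw [mul_zero]; exact card_fiber_zero d hd
  have hfib : ∀ b ∈ ({b : F | σ b = b} : Finset F),
      #{yz ∈ ({yz : F × F | x ^ d + yz.1 ^ d + yz.2 ^ d = 0 ∧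
        x ^ d * σ (yz.1 ^ d) = yz.1 ^ d * σ (x ^ d)} : Finset (F × F)) |
          yz.1 ^ d / x ^ d = b} =
      #{y : F | y ^ d = x ^ d * b} * #{z : F | z ^ d = x ^ d * (-1 - b)} := by
    intro b hb
    simp only [mem_filter, mem_univ, true_and] at hb
    rw [← card_product]
    congr 1
    ext ⟨y, z⟩
    simp only [mem_filter, mem_univ, true_and, mem_product, div_eq_iff hX]
    constructor
    · rintro ⟨⟨h1, h2⟩, h3⟩
      exact ⟨by linear_combination h3, by linear_combination h1 - h3⟩
    · rintro ⟨h1, h2⟩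
      refine ⟨⟨by linear_combination h1 + h2, ?_⟩, by linear_combination h1⟩
      rw [h1, map_mul, hb]; ring
  rw [sum_congr rfl hfib]
  have h01 : (0 : F) ≠ -1 := by simp
  have hsub : ({0, -1} : Finset F) ⊆ ({b : F | σ b = b} : Finset F) := by
    intro b hb
    simp only [mem_insert, mem_singleton] at hb
    rcases hb with rfl | rfl <;> simp
  rw [← sum_sdiff hsub, sum_pair h01, sum_congr rfl (g := fun _ => e ^ 2), sum_const,
    card_sdiff_of_subset hsub, card_pair h01, hK, hg0, hg (-1) (by simp) (by simp),
    sub_zero, hg (-1) (by simp) (by simp), sub_self, hg0, smul_eq_mul]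
  · ring
  · intro b hb
    simp only [mem_sdiff, mem_filter, mem_univ, true_and, mem_insert, mem_singleton,
      not_or] at hb
    rw [hg b hb.1 hb.2.1, hg (-1 - b) (by simp [hb.1]) (fun h => hb.2.2 (by linear_combination -h))]
    ring

open Finset in
lemma card_pairs_zero {F : Type*} [Field F] [Fintype F] [DecidableEq F] (d e : ℕ) (hd : Odd d)
    (he : (Fintype.card F - 1).gcd d = e) :
    #{yz : F × F | yz.1 ^ d + yz.2 ^ d = 0} = 1 + (Fintype.card F - 1) * e := by
  have hd0 : d ≠ 0 := by rintro rfl; simp at hd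
  have h : ∀ y : F, #{z : F | y ^ d + z ^ d = 0} = if y = 0 then 1 else e := by
    intro y
    split_ifs with hy
    · subst hy
      simp only [zero_pow hd0, zero_add]
      exact card_fiber_zero d hd0
    · rw [← he, ← card_fiber d hd0 (-y) (by simpa using hy), hd.neg_pow]
      congr 1
      ext z
      simp only [mem_filter, mem_univ, true_and]
      rw [add_comm, add_eq_zero_iff_eq_neg]
  rw [card_filter, Fintype.sum_prod_type]
  simp only [← card_filter, h]
  rw [← add_sum_erase univ _ (mem_univ (0 : F)), if_pos rfl,
    sum_congr rfl (g := fun _ => e) (fun y hy => if_neg (ne_of_mem_erase hy)), sum_const,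
    card_erase_of_mem (mem_univ _), card_univ, smul_eq_mul]

/-- The order of the kernel of `x ↦ x ^ d₁` is half of `l`, where `t = 4 k + 2`: the exponent `d₁` is
coprime to `Q - 1` and congruent to `-(2 k + 1)` modulo `Q + 1`. -/
lemma two_mul_gcd (Q k : ℕ) (hQ : 2 ≤ Q) (hodd : Odd Q) :
    2 * (Q ^ 2 - 1).gcd ((k + 1) * (Q - 1) + 1) = (4 * k + 2).gcd (Q + 1) := by
  obtain ⟨r, rfl⟩ := hodd
  have h1 : (2 * r + 1) ^ 2 - 1 = (2 * r) * (2 * (r + 1)) := by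
    exact Nat.sub_eq_of_eq_add (by ring)
  rw [h1, Nat.add_sub_cancel, show 2 * r + 1 + 1 = 2 * (r + 1) by ring,
    show 4 * k + 2 = 2 * (2 * k + 1) by ring, Nat.gcd_mul_left]
  congr 1
  have hc : Nat.Coprime (2 * r) ((k + 1) * (2 * r) + 1) := by simp
  rw [Nat.Coprime.gcd_mul_left_cancel _ hc]
  have h2 : Nat.Coprime 2 ((k + 1) * (2 * r) + 1) := Nat.Coprime.coprime_mul_right hc
  rw [Nat.Coprime.gcd_mul_left_cancel _ h2]
  -- modulo `r + 1`, the two numbers are opposite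
  have h3 : (k + 1) * (2 * r) + 1 + (2 * k + 1) = (r + 1) * (2 * (k + 1)) := by ring
  have h4 : r + 1 ∣ (k + 1) * (2 * r) + 1 + (2 * k + 1) := ⟨_, h3⟩
  apply Nat.dvd_antisymm
  · refine Nat.dvd_gcd ?_ (Nat.gcd_dvd_left _ _)
    exact (Nat.dvd_add_right (Nat.gcd_dvd_right _ _)).1 ((Nat.gcd_dvd_left _ _).trans h4)
  · refine Nat.dvd_gcd (Nat.gcd_dvd_right _ _) ?_
    exact (Nat.dvd_add_left (Nat.gcd_dvd_left _ _)).1 ((Nat.gcd_dvd_right _ _).trans h4)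

open Finset in
/-- The count of triples over any field with `Q ^ 2` elements on which `x ↦ x ^ Q` is a ring
homomorphism, with the exponents written in terms of `t = 4 k + 2`. -/
lemma card_triples {F : Type*} [Field F] [Fintype F] [DecidableEq F] (Q k e : ℕ) (hQ : 2 ≤ Q)
    (hodd : Odd Q) (hF : Fintype.card F = Q ^ 2) (σ : F →+* F) (hσ : ∀ x, σ x = x ^ Q)
    (he : (Q ^ 2 - 1).gcd ((k + 1) * (Q - 1) + 1) = e) :
    #{w : F × F × F |
      w.1 ^ ((k + 1) * (Q - 1) + 1) + w.2.1 ^ ((k + 1) * (Q - 1) + 1) +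
        w.2.2 ^ ((k + 1) * (Q - 1) + 1) = 0 ∧
      w.1 ^ ((3 * k + 2) * (Q - 1) + 1) + w.2.1 ^ ((3 * k + 2) * (Q - 1) + 1) +
        w.2.2 ^ ((3 * k + 2) * (Q - 1) + 1) = 0} =
      (1 + (Q ^ 2 - 1) * e) + (Q ^ 2 - 1) * (2 * e + (Q - 2) * e ^ 2) := by
  have hd : Odd ((k + 1) * (Q - 1) + 1) := by
    obtain ⟨r, rfl⟩ := hodd
    exact ⟨(k + 1) * r, by rw [Nat.add_sub_cancel]; ring⟩
  have hpow := fun x : F => pow_exponents Q k hQ hF x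
  simp only [← hσ] at hpow
  have hzero : ∀ x : F, x ^ ((k + 1) * (Q - 1) + 1) = 0 → x ^ ((3 * k + 2) * (Q - 1) + 1) = 0 := by
    intro x hx
    rw [eq_zero_of_pow_eq_zero hx, zero_pow (by omega)]
  have hiff := fun x y z : F => and_congr_right (fun h => system_iff σ (hpow x) (hpow y) (hpow z)
    (hzero x) (hzero y) (hzero z) h)
  simp only [hiff]
  rw [card_filter, Fintype.sum_prod_type]
  simp only [← card_filter]
  rw [← add_sum_erase univ _ (mem_univ (0 : F)),
    sum_congr rfl (g := fun _ => 2 * e + (Q - 2) * e ^ 2) (fun x hx =>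
      card_pairs_of_ne_zero Q (k + 1) e hQ hF σ hσ (by rw [hF, he]) x (ne_of_mem_erase hx)),
    sum_const,
    card_erase_of_mem (mem_univ _), card_univ, smul_eq_mul, hF]
  congr 1
  rw [← hF, ← card_pairs_zero _ e hd (by rw [hF, he])]
  simp

/-- `p` odd prime, `q = p^{2m}`, `t ≡ 2 (mod 4)`, `t ≢ 0 (mod p^m+1)`,
`s₁ = (t+2)/4`, `s₂ = (3t+2)/4`, `dᵢ = sᵢ(p^m-1)+1`, `l = gcd(t, p^m+1)`.  The number
of triples `(x,y,z) ∈ F_q³` with `x^{d₁}+y^{d₁}+z^{d₁} = 0` and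
`x^{d₂}+y^{d₂}+z^{d₂} = 0` equals `((p^m-2)(p^{2m}-1)/4)·l² + (3(p^{2m}-1)/2)·l + 1`. -/
theorem stmt_14 (p m t : ℕ) [Fact p.Prime] (hp : Odd p) (hm : 0 < m)
    (ht : t % 4 = 2) (ht' : ¬ (p ^ m + 1) ∣ t) :
    Nat.card {xyz : GaloisField p (2 * m) × GaloisField p (2 * m) × GaloisField p (2 * m) //
      xyz.1 ^ ((t + 2) / 4 * (p ^ m - 1) + 1) +
        xyz.2.1 ^ ((t + 2) / 4 * (p ^ m - 1) + 1) +
        xyz.2.2 ^ ((t + 2) / 4 * (p ^ m - 1) + 1) = 0 ∧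
      xyz.1 ^ ((3 * t + 2) / 4 * (p ^ m - 1) + 1) +
        xyz.2.1 ^ ((3 * t + 2) / 4 * (p ^ m - 1) + 1) +
        xyz.2.2 ^ ((3 * t + 2) / 4 * (p ^ m - 1) + 1) = 0} =
    (p ^ m - 2) * (p ^ (2 * m) - 1) / 4 * Nat.gcd t (p ^ m + 1) ^ 2 +
      3 * (p ^ (2 * m) - 1) / 2 * Nat.gcd t (p ^ m + 1) + 1 := by
  obtain ⟨k, rfl⟩ : ∃ k, t = 4 * k + 2 := ⟨t / 4, by omega⟩
  rw [show (4 * k + 2 + 2) / 4 = k + 1 by omega,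
    show (3 * (4 * k + 2) + 2) / 4 = 3 * k + 2 by omega]
  have hQ : 2 ≤ p ^ m :=
    (Fact.out : p.Prime).two_le.trans (Nat.le_self_pow hm.ne' p)
  have hodd : Odd (p ^ m) := hp.pow
  classical
  have : Fintype (GaloisField p (2 * m)) := Fintype.ofFinite _
  have hF : Fintype.card (GaloisField p (2 * m)) = (p ^ m) ^ 2 := by
    rw [← Nat.card_eq_fintype_card, GaloisField.card p (2 * m) (by omega), ← pow_mul, mul_comm]
  rw [Nat.card_eq_fintype_card, Fintype.card_subtype,
    card_triples (p ^ m) k _ hQ hodd hF (iterateFrobenius (GaloisField p (2 * m)) p m)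
      (fun x => iterateFrobenius_def p m x) rfl,
    ← two_mul_gcd (p ^ m) k hQ hodd, mul_comm 2 m, pow_mul p m 2]
  generalize ((p ^ m) ^ 2 - 1).gcd ((k + 1) * (p ^ m - 1) + 1) = e
  -- `4 ∣ Q ^ 2 - 1`, so that both divisions are exact
  obtain ⟨r, hr⟩ : ∃ r, (p ^ m) ^ 2 - 1 = 4 * r := by
    obtain ⟨r, hr⟩ := hodd
    refine ⟨r * (r + 1), ?_⟩
    rw [hr]
    exact Nat.sub_eq_of_eq_add (by ring)
  rw [hr, show (p ^ m - 2) * (4 * r) = 4 * ((p ^ m - 2) * r) by ring,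
    Nat.mul_div_cancel_left _ (by norm_num), show 3 * (4 * r) = 2 * (6 * r) by ring,
    Nat.mul_div_cancel_left _ (by norm_num)]
  ring
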